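/- Let n ≥ 3 be an integer, let η > 0, and let m, α, β satisfy 0 < m ≤ (n−2)/n, β > 0, and α < 0. Let v be a radial solution of (E) on [0,∞). Then 0 < v'(r) ≤ (|α|/β)·v(r)/r for all r > 0, and consequently for every r₀ > 0 and all r ≥ r₀, v(r₀) ≤ v(r) ≤ v(r₀)·(r/r₀)^{|α|/β}. -/

import Mathlib

open Real Set Filter

/-- `v` is a radial solution of the elliptic equation
`((n-1)/m)·((v^m)'' + ((n-1)/r)(v^m)') + α v + β r v' = 0` on `[0, ∞)`
with `v > 0`, `v(0) = η`, `v'(0) = 0`. -/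
def IsRadialSol (n : ℕ) (m α β η : ℝ) (v : ℝ → ℝ) : Prop :=
  (∀ r ∈ Set.Ici (0:ℝ), 0 < v r) ∧
  ContinuousOn v (Set.Ici (0:ℝ)) ∧
  ContDiffOn ℝ 2 v (Set.Ioi (0:ℝ)) ∧
  HasDerivWithinAt v 0 (Set.Ici (0:ℝ)) 0 ∧
  v 0 = η ∧
  ∀ r ∈ Set.Ioi (0:ℝ),
    (((n : ℝ) - 1) / m) * (deriv (deriv (fun s => v s ^ m)) r
      + (((n : ℝ) - 1) / r) * deriv (fun s => v s ^ m) r)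
    + α * v r + β * r * deriv v r = 0

/-!
Write `p = v ^ (m - 1) * v'`, so that `(v ^ m)' = m * p` and the equation becomes
`(n - 1) * (p' + (n - 1) / r * p) = -α * v - β * r * v'`. If `p ≤ 0` then `v' ≤ 0`, and the equation
forces `p' > 0`; as `p` accumulates at `0` when `r → 0`, it can never become nonpositive.

For the upper bound, the Euler derivative `w = r * v' / v` satisfies the Riccati equation
`(n - 1) * (r * w' + (n - 2) * w + m * w ^ 2) = -r ^ 2 * v ^ (1 - m) * (α + β * w)`,
whose right-hand side vanishes at `w = |α| / β`. So `w' < 0` wherever `w` equals `|α| / β`, and `w`,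
which also accumulates at `0` when `r → 0`, never crosses this level.

The derivative of `v` is not assumed continuous at `0`; that `v'` still accumulates at `v' 0 = 0`
follows from the mean value theorem.
-/

open scoped Topology

section RealFunctions

variable {f : ℝ → ℝ} {a b c k : ℝ}

lemma mapClusterPt_deriv_nhdsGT (hf : HasDerivWithinAt f c (Ici a) a)
    (hd : ∀ᶠ x in 𝓝[>] a, DifferentiableAt ℝ f x) : MapClusterPt c (𝓝[>] a) (deriv f) := by
  obtain ⟨b, hab, hb⟩ := mem_nhdsGT_iff_exists_Ioo_subset.1 hd
  have mean_value : ∀ y ∈ Ioo a b, ∃ x ∈ Ioo a y, deriv f x = slope f a y := by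
    intro y hy
    have hdiff : ∀ x ∈ Ioo a y, DifferentiableAt ℝ f x := fun x hx => hb ⟨hx.1, hx.2.trans hy.2⟩
    have hcont : ContinuousOn f (Icc a y) := by
      intro x hx
      rcases hx.1.eq_or_lt with rfl | hax
      · exact hf.continuousWithinAt.mono Icc_subset_Ici_self
      · have hdx : DifferentiableAt ℝ f x := hb ⟨hax, hx.2.trans_lt hy.2⟩
        exact hdx.continuousAt.continuousWithinAt
    simpa only [slope_def_field] using
      exists_deriv_eq_slope f hy.1 hcont fun x hx => (hdiff x hx).differentiableWithinAt
  choose! ξ hξ hslope using mean_value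
  have hIoo : Ioo a b ∈ 𝓝[>] a := Ioo_mem_nhdsGT hab
  have hξa : Tendsto ξ (𝓝[>] a) (𝓝[>] a) := by
    refine tendsto_nhdsWithin_iff.2 ⟨?_, mem_of_superset hIoo fun y hy => (hξ y hy).1⟩
    exact tendsto_of_tendsto_of_tendsto_of_le_of_le' tendsto_const_nhds
      (tendsto_nhdsWithin_of_tendsto_nhds tendsto_id)
      (mem_of_superset hIoo fun y hy => (hξ y hy).1.le)
      (mem_of_superset hIoo fun y hy => (hξ y hy).2.le)
  have hlim : Tendsto (slope f a) (𝓝[>] a) (𝓝 c) := by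
    simpa only [Ici_sdiff_left] using hasDerivWithinAt_iff_tendsto_slope.1 hf
  have hderiv : Tendsto (deriv f ∘ ξ) (𝓝[>] a) (𝓝 c) :=
    hlim.congr' (mem_of_superset hIoo fun y hy => (hslope y hy).symm)
  exact .of_comp hξa hderiv.mapClusterPt

lemma mapClusterPt_mul_of_tendsto {l : Filter ℝ} {g : ℝ → ℝ} (hg : Tendsto g l (𝓝 b))
    (hf : MapClusterPt c l f) : MapClusterPt (b * c) l (fun x => g x * f x) := by
  obtain ⟨U, hU, hfU⟩ := mapClusterPt_iff_ultrafilter.1 hf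
  exact mapClusterPt_iff_ultrafilter.2 ⟨U, hU, (hg.mono_left hU).mul hfU⟩

lemma le_of_frequently_le_of_deriv_neg (hf : DifferentiableOn ℝ f (Ioi a))
    (hfreq : ∃ᶠ x in 𝓝[>] a, f x ≤ k) (hneg : ∀ x > a, f x = k → deriv f x < 0) :
    ∀ x > a, f x ≤ k := by
  intro x hx
  obtain ⟨y, hyk, hay, hyx⟩ := (hfreq.and_eventually (Ioo_mem_nhdsGT hx)).exists
  have hd : ∀ z ∈ Icc y x, HasDerivAt f (deriv f z) z := fun z hz =>
    (hf.differentiableAt (Ioi_mem_nhds (hay.trans_le hz.1))).hasDerivAt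
  exact image_le_of_deriv_right_lt_deriv_boundary' (B := fun _ => k) (B' := fun _ => 0)
    (fun z hz => (hd z hz).continuousAt.continuousWithinAt)
    (fun z hz => (hd z (Ico_subset_Icc_self hz)).hasDerivWithinAt) hyk continuousOn_const
    (fun z _ => hasDerivWithinAt_const z _ k) (fun z hz => hneg z (hay.trans_le hz.1))
    (right_mem_Icc.2 hyx.le)

lemma pos_of_mapClusterPt_zero_of_deriv_pos (hf : DifferentiableOn ℝ f (Ioi a))
    (h0 : MapClusterPt 0 (𝓝[>] a) f) (hpos : ∀ x > a, f x ≤ 0 → 0 < deriv f x) :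
    ∀ x > a, 0 < f x := by
  have hnonneg : ∀ x > a, 0 ≤ f x := by
    intro x hx
    refine neg_nonpos.1 (le_of_forall_pos_le_add fun ε hε => ?_)
    rw [zero_add]
    refine le_of_frequently_le_of_deriv_neg hf.neg ?_ (fun y hy hyε => ?_) x hx
    · exact (h0.frequently (Ioi_mem_nhds (neg_lt_zero.2 hε))).mono fun y hy => (neg_lt.1 hy).le
    · rw [deriv.neg, neg_lt_zero]
      have : -f y = ε := hyε
      exact hpos y hy (by linarith)
  refine fun x hx => (hnonneg x hx).lt_of_ne fun hx0 => ?_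
  have hmin : IsLocalMin f x := by
    filter_upwards [Ioi_mem_nhds hx] with y hy using hx0 ▸ hnonneg y hy
  exact (hpos x hx hx0.ge).ne' hmin.deriv_eq_zero

lemma antitoneOn_mul_rpow_neg_of_mul_deriv_le (hf : DifferentiableOn ℝ f (Ioi 0))
    (h : ∀ x > 0, x * deriv f x ≤ k * f x) : AntitoneOn (fun x => f x * x ^ (-k)) (Ioi 0) := by
  have hd : ∀ x > 0, HasDerivAt (fun x => f x * x ^ (-k))
      ((x * deriv f x - k * f x) * x ^ (-k - 1)) x := by
    intro x hx
    refine ((hf.differentiableAt (Ioi_mem_nhds hx)).hasDerivAt.mul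
      (hasDerivAt_rpow_const (p := -k) (Or.inl hx.ne'))).congr_deriv ?_
    rw [rpow_sub_one hx.ne']
    field_simp
    ring
  refine antitoneOn_of_deriv_nonpos (convex_Ioi 0)
    (fun x hx => (hd x hx).continuousAt.continuousWithinAt) ?_ ?_ <;> rw [interior_Ioi]
  · exact fun x hx => (hd x hx).differentiableAt.differentiableWithinAt
  · intro x hx
    rw [(hd x hx).deriv]
    exact mul_nonpos_of_nonpos_of_nonneg (sub_nonpos.2 (h x hx)) (rpow_nonneg hx.le _)

lemma le_mul_div_rpow_of_mul_deriv_le (hf : DifferentiableOn ℝ f (Ioi 0))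
    (h : ∀ x > 0, x * deriv f x ≤ k * f x) (ha : 0 < a) (hab : a ≤ b) :
    f b ≤ f a * (b / a) ^ k := by
  have hb : 0 < b := ha.trans_le hab
  have hanti : f b * b ^ (-k) ≤ f a * a ^ (-k) :=
    antitoneOn_mul_rpow_neg_of_mul_deriv_le hf h ha hb hab
  rw [rpow_neg hb.le, ← div_eq_mul_inv, div_le_iff₀ (rpow_pos_of_pos hb k)] at hanti
  calc f b ≤ f a * a ^ (-k) * b ^ k := hanti
    _ = f a * (b / a) ^ k := by rw [rpow_neg ha.le, div_rpow hb.le ha.le]; ring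

end RealFunctions

/-- The radial flux `(v ^ m)' / m` of the diffusion term of the equation, written without the
division by `m`. -/
noncomputable def radialFlux (m : ℝ) (v : ℝ → ℝ) (r : ℝ) : ℝ :=
  v r ^ (m - 1) * deriv v r

namespace IsRadialSol

variable {n : ℕ} {m α β η k r : ℝ} {v : ℝ → ℝ}

lemma pos (hv : IsRadialSol n m α β η v) (hr : 0 ≤ r) : 0 < v r := hv.1 r hr

lemma continuousOn (hv : IsRadialSol n m α β η v) : ContinuousOn v (Ici 0) := hv.2.1

lemma contDiffOn (hv : IsRadialSol n m α β η v) : ContDiffOn ℝ 2 v (Ioi 0) := hv.2.2.1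

lemma hasDerivWithinAt_zero (hv : IsRadialSol n m α β η v) :
    HasDerivWithinAt v 0 (Ici 0) 0 := hv.2.2.2.1

lemma differentiableOn (hv : IsRadialSol n m α β η v) : DifferentiableOn ℝ v (Ioi 0) :=
  hv.contDiffOn.differentiableOn two_ne_zero

lemma hasDerivAt (hv : IsRadialSol n m α β η v) (hr : 0 < r) : HasDerivAt v (deriv v r) r :=
  (hv.differentiableOn.differentiableAt (Ioi_mem_nhds hr)).hasDerivAt

lemma differentiableOn_deriv (hv : IsRadialSol n m α β η v) :
    DifferentiableOn ℝ (deriv v) (Ioi 0) :=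
  (hv.contDiffOn.deriv_of_isOpen isOpen_Ioi (m := 1) (by norm_num)).differentiableOn one_ne_zero

lemma mapClusterPt_deriv_zero (hv : IsRadialSol n m α β η v) :
    MapClusterPt 0 (𝓝[>] 0) (deriv v) :=
  mapClusterPt_deriv_nhdsGT hv.hasDerivWithinAt_zero
    (mem_of_superset self_mem_nhdsWithin fun _ hr => (hv.hasDerivAt hr).differentiableAt)

lemma tendsto_nhdsGT_zero (hv : IsRadialSol n m α β η v) : Tendsto v (𝓝[>] 0) (𝓝 (v 0)) :=
  (hv.continuousOn 0 self_mem_Ici).mono_left (nhdsWithin_mono 0 Ioi_subset_Ici_self)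

lemma differentiableOn_radialFlux (hv : IsRadialSol n m α β η v) (p : ℝ) :
    DifferentiableOn ℝ (radialFlux p v) (Ioi 0) :=
  (hv.differentiableOn.rpow_const fun _ hs => Or.inl (hv.pos (le_of_lt hs)).ne').mul
    hv.differentiableOn_deriv

lemma mapClusterPt_radialFlux_zero (hv : IsRadialSol n m α β η v) (p : ℝ) :
    MapClusterPt 0 (𝓝[>] 0) (radialFlux p v) := by
  change MapClusterPt 0 (𝓝[>] 0) fun s => v s ^ (p - 1) * deriv v s
  simpa only [mul_zero] using mapClusterPt_mul_of_tendsto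
    (hv.tendsto_nhdsGT_zero.rpow_const (Or.inl (hv.pos le_rfl).ne')) hv.mapClusterPt_deriv_zero

lemma deriv_rpow (hv : IsRadialSol n m α β η v) (hr : 0 < r) (p : ℝ) :
    deriv (fun s => v s ^ p) r = p * radialFlux p v r := by
  rw [((hv.hasDerivAt hr).rpow_const (Or.inl (hv.pos hr.le).ne')).deriv, radialFlux]
  ring

lemma radialFlux_equation (hv : IsRadialSol n m α β η v) (hm : m ≠ 0) (hr : 0 < r) :
    ((n : ℝ) - 1) * (deriv (radialFlux m v) r + ((n : ℝ) - 1) / r * radialFlux m v r) =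
      -α * v r - β * r * deriv v r := by
  have hsecond : deriv (deriv fun s => v s ^ m) r = m * deriv (radialFlux m v) r := by
    rw [← deriv_const_mul_field]
    refine EventuallyEq.deriv_eq ?_
    filter_upwards [Ioi_mem_nhds hr] with s hs using hv.deriv_rpow hs m
  have heq := hv.2.2.2.2.2 r hr
  rw [hsecond, hv.deriv_rpow hr] at heq
  field_simp at heq ⊢
  linear_combination heq

lemma deriv_pos (hv : IsRadialSol n m α β η v) (hn : 2 ≤ n) (hm : m ≠ 0) (hα : α < 0)
    (hβ : 0 ≤ β) (hr : 0 < r) : 0 < deriv v r := by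
  have hn' : (0 : ℝ) < n - 1 := sub_pos.2 (Nat.one_lt_cast.2 hn)
  have hflux : ∀ s > 0, radialFlux m v s ≤ 0 → 0 < deriv (radialFlux m v) s := by
    intro s hs hle
    have hvs : 0 < v s := hv.pos hs.le
    have hv' : deriv v s ≤ 0 := nonpos_of_mul_nonpos_right hle (rpow_pos_of_pos hvs _)
    have hsource : 0 < -α * v s - β * s * deriv v s := by
      have : 0 < -α * v s := mul_pos (neg_pos.2 hα) hvs
      have : β * s * deriv v s ≤ 0 := mul_nonpos_of_nonneg_of_nonpos (mul_nonneg hβ hs.le) hv'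
      linarith
    rw [← hv.radialFlux_equation hm hs] at hsource
    have : ((n : ℝ) - 1) / s * radialFlux m v s ≤ 0 :=
      mul_nonpos_of_nonneg_of_nonpos (by positivity) hle
    linarith [pos_of_mul_pos_right hsource hn'.le]
  exact pos_of_mul_pos_right
    (pos_of_mapClusterPt_zero_of_deriv_pos (hv.differentiableOn_radialFlux m)
      (hv.mapClusterPt_radialFlux_zero m) hflux r hr)
    (rpow_nonneg (hv.pos hr.le).le _)

lemma mul_logDeriv_eq (hv : IsRadialSol n m α β η v) (hr : 0 < r) (p : ℝ) :
    r * logDeriv v r = r * radialFlux p v r * v r ^ (-p) := by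
  have hvr : 0 < v r := hv.pos hr.le
  have hpow : v r ^ (p - 1) * v r ^ (-p) = (v r)⁻¹ := by
    rw [← rpow_add hvr, ← rpow_neg_one]
    ring_nf
  rw [logDeriv_apply, radialFlux, div_eq_mul_inv, ← hpow]
  ring

lemma differentiableOn_mul_logDeriv (hv : IsRadialSol n m α β η v) :
    DifferentiableOn ℝ (fun s => s * logDeriv v s) (Ioi 0) :=
  differentiableOn_id.mul
    (hv.differentiableOn_deriv.div hv.differentiableOn fun _ hs => (hv.pos (le_of_lt hs)).ne')

lemma mapClusterPt_mul_logDeriv_zero (hv : IsRadialSol n m α β η v) :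
    MapClusterPt 0 (𝓝[>] 0) (fun s => s * logDeriv v s) := by
  have hquot : Tendsto (fun s => s / v s) (𝓝[>] 0) (𝓝 (0 / v 0)) :=
    (tendsto_id.mono_left nhdsWithin_le_nhds).div hv.tendsto_nhdsGT_zero (hv.pos le_rfl).ne'
  simpa only [mul_zero, logDeriv_apply, div_mul_eq_mul_div, mul_div_assoc] using
    mapClusterPt_mul_of_tendsto hquot hv.mapClusterPt_deriv_zero

lemma riccati_equation (hv : IsRadialSol n m α β η v) (hm : m ≠ 0) (hr : 0 < r) :
    ((n : ℝ) - 1) * (r * deriv (fun s => s * logDeriv v s) r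
        + ((n : ℝ) - 2) * (r * logDeriv v r) + m * (r * logDeriv v r) ^ 2) =
      -r ^ 2 * v r ^ (1 - m) * (α + β * (r * logDeriv v r)) := by
  have hvr : 0 < v r := hv.pos hr.le
  have hflux : HasDerivAt (radialFlux m v) (deriv (radialFlux m v) r) r :=
    ((hv.differentiableOn_radialFlux m).differentiableAt (Ioi_mem_nhds hr)).hasDerivAt
  have hpow : HasDerivAt (fun s => v s ^ (-m)) (deriv v r * -m * v r ^ (-m - 1)) r :=
    (hv.hasDerivAt hr).rpow_const (Or.inl hvr.ne')
  have hderiv : deriv (fun s => s * logDeriv v s) r =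
      (radialFlux m v r + r * deriv (radialFlux m v) r) * v r ^ (-m) +
        r * radialFlux m v r * (deriv v r * -m * v r ^ (-m - 1)) := by
    have hprod := (((hasDerivAt_id r).mul hflux).mul hpow).congr_of_eventuallyEq <| by
      filter_upwards [Ioi_mem_nhds hr] with s hs using hv.mul_logDeriv_eq hs m
    simpa only [id, Pi.mul_apply, one_mul] using hprod.deriv
  have heq := hv.radialFlux_equation hm hr
  rw [hderiv, logDeriv_apply]
  simp only [radialFlux, rpow_sub_one hvr.ne', rpow_neg hvr.le, rpow_sub hvr, rpow_one] at heq ⊢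
  generalize deriv (radialFlux m v) r = p' at heq ⊢
  field_simp at heq ⊢
  linear_combination v r * heq

lemma mul_logDeriv_le (hv : IsRadialSol n m α β η v) (hn : 2 ≤ n) (hm : m ≠ 0) (hk : 0 < k)
    (hkαβ : 0 ≤ α + β * k) (hkm : 0 < (n : ℝ) - 2 + m * k) (hr : 0 < r) :
    r * logDeriv v r ≤ k := by
  have hn' : (0 : ℝ) < n - 1 := sub_pos.2 (Nat.one_lt_cast.2 hn)
  refine le_of_frequently_le_of_deriv_neg hv.differentiableOn_mul_logDeriv
    ((hv.mapClusterPt_mul_logDeriv_zero.frequently (Iio_mem_nhds hk)).mono fun _ hs => le_of_lt hs)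
    (fun s hs hsk => ?_) r hr
  have hriccati := hv.riccati_equation hm hs
  rw [hsk] at hriccati
  have hrhs : 0 ≤ s ^ 2 * v s ^ (1 - m) * (α + β * k) :=
    mul_nonneg (mul_nonneg (sq_nonneg s) (rpow_nonneg (hv.pos hs.le).le _)) hkαβ
  have hkpos : 0 < ((n : ℝ) - 2) * k + m * k ^ 2 := by
    linarith [mul_pos hkm hk]
  have hsum : s * deriv (fun t => t * logDeriv v t) s + (n - 2) * k + m * k ^ 2 ≤ 0 :=
    nonpos_of_mul_nonpos_right (by linarith) hn'
  exact neg_of_mul_neg_right (by linarith : s * _ < 0) hs.le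

end IsRadialSol

theorem stmt15_general {n : ℕ} {m α β η : ℝ} {v : ℝ → ℝ} (hv : IsRadialSol n m α β η v)
    (hn : 2 ≤ n) (hm : m ≠ 0) (hmk : 0 < (n : ℝ) - 2 + m * (|α| / β)) (hβ : 0 < β) (hα : α < 0) :
    (∀ r : ℝ, 0 < r → 0 < deriv v r ∧ deriv v r ≤ (|α| / β) * v r / r) ∧
    (∀ r₀ : ℝ, 0 < r₀ → ∀ r : ℝ, r₀ ≤ r →
      v r₀ ≤ v r ∧ v r ≤ v r₀ * (r / r₀) ^ (|α| / β)) := by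
  have hderiv_pos : ∀ r > 0, 0 < deriv v r := fun r hr => hv.deriv_pos hn hm hα hβ.le hr
  have hk : α + β * (|α| / β) = 0 := by rw [abs_of_neg hα]; field_simp; ring
  have hderiv_le : ∀ r > 0, r * deriv v r ≤ |α| / β * v r := by
    intro r hr
    have := hv.mul_logDeriv_le hn hm (div_pos (abs_pos.2 hα.ne) hβ) hk.ge hmk hr
    rwa [logDeriv_apply, ← mul_div_assoc, div_le_iff₀ (hv.pos hr.le)] at this
  have hmono : StrictMonoOn v (Ioi 0) :=
    strictMonoOn_of_deriv_pos (convex_Ioi 0) hv.differentiableOn.continuousOn fun r hr =>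
      hderiv_pos r (interior_subset hr)
  refine ⟨fun r hr => ⟨hderiv_pos r hr, ?_⟩, fun r₀ hr₀ r hr => ⟨?_, ?_⟩⟩
  · rw [le_div_iff₀' hr]
    exact hderiv_le r hr
  · exact hmono.monotoneOn hr₀ (hr₀.trans_le hr) hr
  · exact le_mul_div_rpow_of_mul_deriv_le hv.differentiableOn hderiv_le hr₀ hr

theorem stmt15 (n : ℕ) (hn : 3 ≤ n) (m α β η : ℝ) (hη : 0 < η)
    (hm : 0 < m) (hm' : m ≤ ((n : ℝ) - 2) / n)
    (hβ : 0 < β) (hα : α < 0)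
    (v : ℝ → ℝ) (hv : IsRadialSol n m α β η v) :
    (∀ r : ℝ, 0 < r →
      0 < deriv v r ∧ deriv v r ≤ (|α| / β) * v r / r) ∧
    (∀ r₀ : ℝ, 0 < r₀ → ∀ r : ℝ, r₀ ≤ r →
      v r₀ ≤ v r ∧ v r ≤ v r₀ * (r / r₀) ^ (|α| / β)) := by
  have hn' : (2 : ℝ) < n := mod_cast hn
  exact stmt15_general hv (by omega) hm.ne'
    (add_pos_of_pos_of_nonneg (sub_pos.2 hn') (by positivity)) hβ hα
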